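/- Let k ∈ (0,1). For every n ∈ ℕ, Kuznetsov's moment integral I_n^− has the absolutely convergent Eisenstein series expansion (I_n^− : ℂ) = (−1)^{n+1} · 2 · (2n+3)! · Σ_{(p,q) ∈ ℤ²} ((2q + p − 1)K + i p K')^{−(2n+4)}, where the complex numbers (2q+p−1)K + ipK' are nonzero for all (p,q) ∈ ℤ². -/

import Mathlib

/-!
Let `a, b > 0` and put `α, β = (a ± i b) / 2`, so that `cosh (a t) - cos (b t)` factors as
`2 sinh (α t) sinh (β t)`. Expanding `1 / (2 sinh z) = ∑ exp (-(2 k + 1) z)` in both factors and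
integrating against `t ^ s` term by term gives

  `∫ t ^ s / (cosh (a t) - cos (b t)) dt = 2 s! ∑ ((2 k + 1) α + (2 l + 1) β) ^ (-(s + 1))`

over `k, l ≥ 0`. The Eisenstein series with periods `a = K`, `b = K'` runs over all the points
`(2 u + 1) α + (2 v + 1) β` with `u, v ∈ ℤ`, and these fall into four quadrants according to the
signs of `2 u + 1` and `2 v + 1`. For even exponents opposite quadrants contribute equally, and the
quadrants of mixed sign are obtained from the others by a quarter turn, which exchanges `a` and `b`.
After `x = t ^ 2` the two integrals in `I_n^−` are these two contributions.
-/

open MeasureTheory Real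

/-- The complete elliptic integral of the first kind `K(k)`. -/
noncomputable def ellipticK (k : ℝ) : ℝ :=
  ∫ θ in (0 : ℝ)..(π / 2), (1 - k ^ 2 * Real.sin θ ^ 2) ^ (-(1 / 2) : ℝ)

/-- Kuznetsov's moment integral `I_n^+`, realizing
`(1/2)∫_ℝ x^n dx/(cos(√x K) + cosh(√x K'))` with `√x = i√(−x)` for `x < 0`. -/
noncomputable def Iplus (k : ℝ) (n : ℕ) : ℝ :=
  (1 / 2) * (∫ x in Set.Ioi (0 : ℝ), x ^ n /
      (Real.cos (ellipticK k * Real.sqrt x) +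
        Real.cosh (ellipticK (Real.sqrt (1 - k ^ 2)) * Real.sqrt x)))
  + ((-1 : ℝ) ^ n / 2) * (∫ x in Set.Ioi (0 : ℝ), x ^ n /
      (Real.cosh (ellipticK k * Real.sqrt x) +
        Real.cos (ellipticK (Real.sqrt (1 - k ^ 2)) * Real.sqrt x)))

/-- Kuznetsov's moment integral `I_n^−`, realizing
`∫_ℝ x^{n+1} dx/(cos(√x K) − cosh(√x K'))` with `√x = i√(−x)` for `x < 0`. -/
noncomputable def Iminus (k : ℝ) (n : ℕ) : ℝ :=
  (∫ x in Set.Ioi (0 : ℝ), x ^ (n + 1) /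
      (Real.cos (ellipticK k * Real.sqrt x) -
        Real.cosh (ellipticK (Real.sqrt (1 - k ^ 2)) * Real.sqrt x)))
  + (-1 : ℝ) ^ (n + 1) * (∫ x in Set.Ioi (0 : ℝ), x ^ (n + 1) /
      (Real.cosh (ellipticK k * Real.sqrt x) -
        Real.cos (ellipticK (Real.sqrt (1 - k ^ 2)) * Real.sqrt x)))

open Filter Topology

section EllipticIntegral

lemma ellipticK_pos {k : ℝ} (hk : k ^ 2 < 1) : 0 < ellipticK k := by
  have hpos (θ : ℝ) : 0 < 1 - k ^ 2 * sin θ ^ 2 := by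
    nlinarith [sq_nonneg k, sin_sq_le_one θ]
  refine intervalIntegral.intervalIntegral_pos_of_pos (Continuous.intervalIntegrable ?_ _ _)
    (fun θ ↦ rpow_pos_of_pos (hpos θ) _) (by positivity)
  exact Continuous.rpow_const (by fun_prop) fun θ ↦ Or.inl (hpos θ).ne'

end EllipticIntegral

section LaplaceTransform

lemma integral_pow_mul_exp_neg_mul_Ioi (s : ℕ) {c : ℝ} (hc : 0 < c) :
    ∫ t in Set.Ioi (0 : ℝ), t ^ s * exp (-(c * t)) = s.factorial / c ^ (s + 1) := by
  have h := integral_rpow_mul_exp_neg_mul_Ioi (a := s + 1) (r := c) (by positivity) hc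
  simp only [add_sub_cancel_right, rpow_natCast, Gamma_nat_eq_factorial] at h
  rw [h, ← Nat.cast_succ, rpow_natCast, one_div, inv_pow, inv_mul_eq_div]

lemma integrableOn_pow_mul_exp_neg_mul_Ioi (s : ℕ) {c : ℝ} (hc : 0 < c) :
    IntegrableOn (fun t : ℝ ↦ t ^ s * exp (-(c * t))) (Set.Ioi 0) :=
  .of_integral_ne_zero (by rw [integral_pow_mul_exp_neg_mul_Ioi s hc]; positivity)

variable (s : ℕ) {r : ℂ}

lemma norm_pow_mul_cexp_neg_mul (r : ℂ) {t : ℝ} (ht : 0 ≤ t) :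
    ‖(t : ℂ) ^ s * Complex.exp (-(r * t))‖ = t ^ s * exp (-(r.re * t)) := by
  simp [Complex.norm_exp, abs_of_nonneg ht]

lemma integrableOn_pow_mul_cexp_neg_mul_Ioi (hr : 0 < r.re) :
    IntegrableOn (fun t : ℝ ↦ (t : ℂ) ^ s * Complex.exp (-(r * t))) (Set.Ioi 0) := by
  refine (integrableOn_pow_mul_exp_neg_mul_Ioi s hr).mono'
    (Continuous.aestronglyMeasurable (by fun_prop)) ?_
  filter_upwards [ae_restrict_mem measurableSet_Ioi] with t ht
  exact (norm_pow_mul_cexp_neg_mul s r (le_of_lt ht)).le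

lemma integral_norm_pow_mul_cexp_neg_mul_Ioi (hr : 0 < r.re) :
    ∫ t in Set.Ioi (0 : ℝ), ‖(t : ℂ) ^ s * Complex.exp (-(r * t))‖ =
      s.factorial / r.re ^ (s + 1) := by
  rw [← integral_pow_mul_exp_neg_mul_Ioi s hr]
  exact setIntegral_congr_fun measurableSet_Ioi fun t ht ↦
    norm_pow_mul_cexp_neg_mul s r (le_of_lt ht)

lemma tendsto_pow_mul_cexp_neg_mul_atTop (hr : 0 < r.re) :
    Tendsto (fun t : ℝ ↦ (t : ℂ) ^ s * Complex.exp (-(r * t))) atTop (𝓝 0) := by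
  rw [tendsto_zero_iff_norm_tendsto_zero]
  refine (tendsto_rpow_mul_exp_neg_mul_atTop_nhds_zero s r.re hr).congr' ?_
  filter_upwards [eventually_ge_atTop 0] with t ht
  rw [norm_pow_mul_cexp_neg_mul s r ht, rpow_natCast, neg_mul]

lemma integral_pow_succ_mul_cexp_neg_mul_Ioi (hr : 0 < r.re) :
    ∫ t in Set.Ioi (0 : ℝ), (t : ℂ) ^ (s + 1) * Complex.exp (-(r * t)) =
      (s + 1) / r * ∫ t in Set.Ioi (0 : ℝ), (t : ℂ) ^ s * Complex.exp (-(r * t)) := by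
  have hr0 : r ≠ 0 := by rintro rfl; simp at hr
  have hpow (t : ℝ) : HasDerivAt (fun t : ℝ ↦ (t : ℂ) ^ (s + 1)) ((s + 1) * (t : ℂ) ^ s) t := by
    simpa using (hasDerivAt_pow (s + 1) (t : ℂ)).comp_ofReal
  have hexp (t : ℝ) : HasDerivAt (fun t : ℝ ↦ -r⁻¹ * Complex.exp (-(r * t)))
      (Complex.exp (-(r * t))) t := by
    have h := ((hasDerivAt_id (t : ℂ)).const_mul r).neg.cexp.const_mul (-r⁻¹)
    exact (h.congr_deriv (by simp; field_simp)).comp_ofReal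
  have hprod : (fun t : ℝ ↦ (t : ℂ) ^ (s + 1)) * (fun t : ℝ ↦ -r⁻¹ * Complex.exp (-(r * t))) =
      fun t : ℝ ↦ -r⁻¹ * ((t : ℂ) ^ (s + 1) * Complex.exp (-(r * t))) := by
    ext t; simp only [Pi.mul_apply]; ring
  rw [integral_Ioi_mul_deriv_eq_deriv_mul (a' := 0) (b' := 0) (fun t _ ↦ hpow t) (fun t _ ↦ hexp t)
    (integrableOn_pow_mul_cexp_neg_mul_Ioi (s + 1) hr)]
  · rw [sub_zero, zero_sub, ← integral_neg, ← integral_const_mul]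
    congr 1 with t
    ring
  · have hint := (integrableOn_pow_mul_cexp_neg_mul_Ioi s hr).const_mul (-((s + 1) / r))
    refine IntegrableOn.congr_fun hint (fun t _ ↦ ?_) measurableSet_Ioi
    simp only [Pi.mul_apply]
    ring
  · rw [hprod]
    refine tendsto_nhdsWithin_of_tendsto_nhds ?_
    exact Continuous.tendsto' (by fun_prop) _ _ (by simp)
  · rw [hprod]
    simpa using (tendsto_pow_mul_cexp_neg_mul_atTop (s + 1) hr).const_mul (-r⁻¹)

lemma integral_pow_mul_cexp_neg_mul_Ioi (hr : 0 < r.re) :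
    ∫ t in Set.Ioi (0 : ℝ), (t : ℂ) ^ s * Complex.exp (-(r * t)) = s.factorial / r ^ (s + 1) := by
  induction s with
  | zero =>
    simpa [neg_div_neg_eq] using integral_exp_mul_complex_Ioi (a := -r) (by simpa using hr) 0
  | succ s ih =>
    rw [integral_pow_succ_mul_cexp_neg_mul_Ioi s hr, ih, Nat.factorial_succ, pow_succ r (s + 1),
      div_mul_div_comm]
    push_cast
    ring

end LaplaceTransform

section Quadrants

lemma summable_comp_fst_add_snd_iff {f : ℕ → ℝ} (hf : ∀ n, 0 ≤ f n) :
    Summable (fun kl : ℕ × ℕ ↦ f (kl.1 + kl.2)) ↔ Summable fun n : ℕ ↦ ((n : ℝ) + 1) * f n := by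
  refine Finset.HasAntidiagonal.sigmaAntidiagonalEquivProd.summable_iff.symm.trans
    ((summable_sigma_of_nonneg fun _ ↦ hf _).trans ?_)
  have hconst (n : ℕ) (kl : Finset.HasAntidiagonal.antidiagonal n) :
      ((fun kl : ℕ × ℕ ↦ f (kl.1 + kl.2)) ∘ Finset.HasAntidiagonal.sigmaAntidiagonalEquivProd)
        ⟨n, kl⟩ = f n :=
    congrArg f (Finset.HasAntidiagonal.mem_antidiagonal.mp kl.2)
  rw [and_iff_right fun n ↦ (hasSum_fintype _).summable]
  refine summable_congr fun n ↦ ?_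
  rw [tsum_fintype]
  exact (Finset.sum_congr rfl fun kl _ ↦ hconst n kl).trans (by simp)

lemma summable_inv_odd_mul_add_odd_mul_pow {s : ℕ} (hs : 2 ≤ s) {x y : ℝ}
    (hx : 0 < x) (hy : 0 < y) :
    Summable fun kl : ℕ × ℕ ↦ (((2 * kl.1 + 1) * x + (2 * kl.2 + 1) * y) ^ (s + 1))⁻¹ := by
  have hdiag : Summable fun kl : ℕ × ℕ ↦ ((((kl.1 + kl.2 : ℕ) : ℝ) + 1) ^ (s + 1))⁻¹ := by
    refine (summable_comp_fst_add_snd_iff (f := fun n ↦ (((n : ℝ) + 1) ^ (s + 1))⁻¹)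
      fun n ↦ by positivity).mpr ?_
    have hzeta : Summable fun n : ℕ ↦ (((n : ℝ) + 1) ^ s)⁻¹ := by
      exact_mod_cast (summable_nat_add_iff 1).mpr (summable_nat_pow_inv.mpr hs)
    refine hzeta.congr fun n ↦ ?_
    rw [pow_succ', mul_inv, mul_inv_cancel_left₀ (by positivity)]
  refine .of_nonneg_of_le (fun _ ↦ by positivity) (fun ⟨k, l⟩ ↦ ?_)
    (hdiag.mul_left ((min x y) ^ (s + 1))⁻¹)
  have hmin : 0 < min x y := lt_min hx hy
  rw [← mul_inv, ← mul_pow]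
  gcongr
  calc min x y * (((k + l : ℕ) : ℝ) + 1) ≤ (2 * k + 1) * min x y + (2 * l + 1) * min x y := by
        push_cast; nlinarith [mul_nonneg k.cast_nonneg hmin.le, mul_nonneg l.cast_nonneg hmin.le]
    _ ≤ (2 * k + 1) * x + (2 * l + 1) * y := by
        gcongr
        exacts [min_le_left x y, min_le_right x y]

lemma hasSum_int_prod_of_quadrants {M : Type*} [AddCommMonoid M] [TopologicalSpace M]
    [ContinuousAdd M] {f : ℤ × ℤ → M} {a b c d : M}
    (ha : HasSum (fun kl : ℕ × ℕ ↦ f (kl.1, kl.2)) a)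
    (hb : HasSum (fun kl : ℕ × ℕ ↦ f (kl.1, Int.negSucc kl.2)) b)
    (hc : HasSum (fun kl : ℕ × ℕ ↦ f (Int.negSucc kl.1, kl.2)) c)
    (hd : HasSum (fun kl : ℕ × ℕ ↦ f (Int.negSucc kl.1, Int.negSucc kl.2)) d) :
    HasSum f (a + b + (c + d)) := by
  let e : (ℕ × ℕ ⊕ ℕ × ℕ) ⊕ (ℕ × ℕ ⊕ ℕ × ℕ) ≃ ℤ × ℤ :=
    ((Equiv.sumProdDistrib ℕ ℕ (ℕ ⊕ ℕ)).trans (Equiv.sumCongr (Equiv.prodSumDistrib ℕ ℕ ℕ)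
      (Equiv.prodSumDistrib ℕ ℕ ℕ))).symm.trans
      (Equiv.prodCongr Equiv.intEquivNatSumNat.symm Equiv.intEquivNatSumNat.symm)
  exact e.hasSum_iff.mp ((ha.sum hb).sum (hc.sum hd))

end Quadrants

section HyperbolicKernel

lemma hasSum_cexp_neg_odd_mul {α : ℂ} (hα : 0 < α.re) :
    HasSum (fun k : ℕ ↦ Complex.exp (-((2 * k + 1) * α))) (2 * Complex.sinh α)⁻¹ := by
  have hnorm : ‖Complex.exp (-(2 * α))‖ < 1 := by simpa [Complex.norm_exp] using hα
  have hvalue : Complex.exp (-α) * (1 - Complex.exp (-(2 * α)))⁻¹ = (2 * Complex.sinh α)⁻¹ := by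
    have hfactor : 1 - Complex.exp (-(2 * α)) = Complex.exp (-α) * (2 * Complex.sinh α) := by
      rw [Complex.two_sinh, mul_sub, ← Complex.exp_add, ← Complex.exp_add, neg_add_cancel,
        Complex.exp_zero, ← neg_add, two_mul]
    rw [hfactor, mul_inv, mul_inv_cancel_left₀ (Complex.exp_ne_zero _)]
  rw [← hvalue]
  refine ((hasSum_geometric_of_norm_lt_one hnorm).mul_left _).congr_fun fun k ↦ ?_
  rw [← Complex.exp_nat_mul, ← Complex.exp_add]
  ring_nf

lemma hasSum_cexp_neg_odd_mul_add_odd_mul {α β : ℂ} (hα : 0 < α.re) (hβ : 0 < β.re) :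
    HasSum (fun kl : ℕ × ℕ ↦ Complex.exp (-((2 * kl.1 + 1) * α + (2 * kl.2 + 1) * β)))
      (2 * (Complex.cosh (α + β) - Complex.cosh (α - β)))⁻¹ := by
  have h₁ := hasSum_cexp_neg_odd_mul hα
  have h₂ := hasSum_cexp_neg_odd_mul hβ
  have hvalue : (2 * (Complex.cosh (α + β) - Complex.cosh (α - β)))⁻¹ =
      (2 * Complex.sinh α)⁻¹ * (2 * Complex.sinh β)⁻¹ := by
    rw [Complex.cosh_add, Complex.cosh_sub, ← mul_inv]
    ring_nf
  rw [hvalue]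
  have hmul := summable_mul_of_summable_norm h₁.summable.norm h₂.summable.norm
  simpa only [neg_add, Complex.exp_add] using h₁.mul h₂ hmul

/-- The moment of order `s` of the kernel `1 / (2 sinh (α t) sinh (β t))` on the half-line, the
denominator being written as a difference of hyperbolic cosines. -/
noncomputable def coshMoment (s : ℕ) (α β : ℂ) : ℂ :=
  ∫ t in Set.Ioi (0 : ℝ),
    (t : ℂ) ^ s / (Complex.cosh ((α + β) * t) - Complex.cosh ((α - β) * t))

lemma hasSum_inv_odd_mul_add_odd_mul_pow {s : ℕ} (hs : 2 ≤ s) {α β : ℂ}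
    (hα : 0 < α.re) (hβ : 0 < β.re) :
    HasSum (fun kl : ℕ × ℕ ↦ (((2 * kl.1 + 1) * α + (2 * kl.2 + 1) * β) ^ (s + 1))⁻¹)
      (coshMoment s α β / (2 * s.factorial)) := by
  let ρ (kl : ℕ × ℕ) : ℂ := (2 * kl.1 + 1) * α + (2 * kl.2 + 1) * β
  have hre (kl : ℕ × ℕ) : (ρ kl).re = (2 * kl.1 + 1) * α.re + (2 * kl.2 + 1) * β.re := by
    simp [ρ]
  have hpos (kl : ℕ × ℕ) : 0 < (ρ kl).re := by rw [hre]; positivity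
  have hnorm : Summable fun kl ↦
      ∫ t in Set.Ioi (0 : ℝ), ‖(t : ℂ) ^ s * Complex.exp (-(ρ kl * t))‖ := by
    simp only [integral_norm_pow_mul_cexp_neg_mul_Ioi s (hpos _), hre]
    exact (summable_inv_odd_mul_add_odd_mul_pow hs hα hβ).mul_left _
  have hkernel : ∫ t in Set.Ioi (0 : ℝ), ∑' kl, (t : ℂ) ^ s * Complex.exp (-(ρ kl * t)) =
      coshMoment s α β / 2 := by
    rw [coshMoment, ← integral_div]
    refine setIntegral_congr_fun measurableSet_Ioi fun t (ht : 0 < t) ↦ ?_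
    have h := hasSum_cexp_neg_odd_mul_add_odd_mul (α := α * t) (β := β * t)
      (by simpa using mul_pos hα ht) (by simpa using mul_pos hβ ht)
    simp only [← mul_assoc, ← add_mul, ← sub_mul] at h
    rw [(h.mul_left _).tsum_eq, ← div_eq_mul_inv, mul_comm 2, div_div]
  have h := hasSum_integral_of_summable_integral_norm
    (fun kl ↦ integrableOn_pow_mul_cexp_neg_mul_Ioi s (hpos kl)) hnorm
  simp only [integral_pow_mul_cexp_neg_mul_Ioi s (hpos _), hkernel] at h
  rw [← div_div]
  refine (h.div_const (s.factorial : ℂ)).congr_fun fun kl ↦ ?_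
  rw [div_div_cancel_left' (Nat.cast_ne_zero.mpr s.factorial_ne_zero)]

end HyperbolicKernel

section Lattice

/-- The quadrant where `2 u + 1` and `2 v + 1` have opposite signs is turned into the
right half-plane by a quarter turn, whence the factor `I ^ (2 * n + 4) = (-1) ^ n`. -/
lemma hasSum_int_prod_inv_odd_mul_add_odd_mul_pow (n : ℕ) {α β : ℂ} (hα : 0 < α.re) (hα' : 0 < α.im)
    (hβ : 0 < β.re) (hβ' : β.im < 0) :
    HasSum (fun uv : ℤ × ℤ ↦ (((2 * uv.1 + 1) * α + (2 * uv.2 + 1) * β) ^ (2 * n + 4))⁻¹)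
      ((coshMoment (2 * n + 3) α β +
        (-1) ^ n * coshMoment (2 * n + 3) (-Complex.I * α) (Complex.I * β)) /
          (2 * n + 3).factorial) := by
  have heven : Even (2 * n + 4) := ⟨n + 2, by ring⟩
  have hI (z : ℂ) : ((Complex.I * z) ^ (2 * n + 4))⁻¹ = (-1) ^ n * (z ^ (2 * n + 4))⁻¹ := by
    rw [mul_pow, pow_add, pow_mul, Complex.I_sq, Complex.I_pow_four, mul_one, mul_inv, ← inv_pow,
      inv_neg_one]
  have hpos := hasSum_inv_odd_mul_add_odd_mul_pow (s := 2 * n + 3) (by omega) hα hβ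
  have hmixed := (hasSum_inv_odd_mul_add_odd_mul_pow (s := 2 * n + 3) (by omega)
    (α := -Complex.I * α) (β := Complex.I * β) (by simpa) (by simpa)).mul_left ((-1) ^ n)
  simp only [← hI] at hmixed
  convert! hasSum_int_prod_of_quadrants (hpos.congr_fun ?_) (hmixed.congr_fun ?_)
    (hmixed.congr_fun ?_) (hpos.congr_fun ?_) using 1
  · field_simp
    ring
  · rintro ⟨k, l⟩
    simp
  · rintro ⟨k, l⟩
    congr 2
    push_cast [Int.cast_negSucc]
    linear_combination ((2 * k + 1) * α - (2 * l + 1) * β) * Complex.I_sq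
  · rintro ⟨k, l⟩
    rw [← heven.neg_pow]
    congr 2
    push_cast [Int.cast_negSucc]
    linear_combination ((2 * k + 1) * α - (2 * l + 1) * β) * Complex.I_sq
  · rintro ⟨k, l⟩
    rw [← heven.neg_pow]
    congr 2
    push_cast [Int.cast_negSucc]
    ring

/-- The point of the Eisenstein series with index `(p, q)`, with arbitrary real numbers `a` and
`b` in place of `K` and `K'`. -/
noncomputable def eisensteinPoint (a b : ℝ) (pq : ℤ × ℤ) : ℂ :=
  ((2 * pq.2 + pq.1 - 1 : ℤ) : ℂ) * a + Complex.I * pq.1 * b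

lemma eisensteinPoint_ne_zero {a b : ℝ} (ha : a ≠ 0) (hb : b ≠ 0) (pq : ℤ × ℤ) :
    eisensteinPoint a b pq ≠ 0 := by
  obtain ⟨p, q⟩ := pq
  intro h
  have hp : p = 0 := by simpa [eisensteinPoint, hb] using congrArg Complex.im h
  have hq : 2 * q + p - 1 = 0 := by
    have hre : ((2 * q + p - 1 : ℤ) : ℝ) * a = 0 := by
      simpa [eisensteinPoint] using congrArg Complex.re h
    exact_mod_cast (mul_eq_zero.mp hre).resolve_right ha
  omega

/-- The change of index `(p, q) ↦ (u, v)` for which `eisensteinPoint a b (p, q)` equals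
`(2 u + 1) α + (2 v + 1) β` with `α, β = (a ± i b) / 2`. -/
def oddCoordinates : ℤ × ℤ ≃ ℤ × ℤ where
  toFun pq := (pq.1 + pq.2 - 1, pq.2 - 1)
  invFun uv := (uv.1 - uv.2, uv.2 + 1)
  left_inv pq := by ext <;> simp
  right_inv uv := by ext <;> simp; ring

lemma eisensteinPoint_eq_oddCoordinates (a b : ℝ) (pq : ℤ × ℤ) :
    eisensteinPoint a b pq = (2 * (oddCoordinates pq).1 + 1) * ((a + b * Complex.I) / 2) +
      (2 * (oddCoordinates pq).2 + 1) * ((a - b * Complex.I) / 2) := by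
  simp only [eisensteinPoint, oddCoordinates, Equiv.coe_fn_mk]
  push_cast
  ring

end Lattice

section Moments

/-- The moment of order `s` of the kernel `1 / (cosh (a t) - cos (b t))` on the half-line: the
common form of the two integrals in `I_n^−` after the substitution `x = t ^ 2`. -/
noncomputable def coshSubCosMoment (s : ℕ) (a b : ℝ) : ℝ :=
  ∫ t in Set.Ioi (0 : ℝ), t ^ s / (cosh (a * t) - cos (b * t))

lemma coshMoment_eq_coshSubCosMoment (s : ℕ) {α β : ℂ} {a b : ℝ} (hadd : α + β = a)
    (hsub : α - β = b * Complex.I) : coshMoment s α β = coshSubCosMoment s a b := by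
  rw [coshMoment, coshSubCosMoment, ← integral_complex_ofReal, hadd, hsub]
  congr 1 with t
  rw [mul_right_comm, ← Complex.ofReal_mul b, Complex.cosh_mul_I]
  push_cast
  rfl

lemma coshSubCosMoment_neg_right (s : ℕ) (a b : ℝ) :
    coshSubCosMoment s a (-b) = coshSubCosMoment s a b := by
  simp only [coshSubCosMoment, neg_mul, cos_neg]

lemma hasSum_inv_eisensteinPoint_pow {a b : ℝ} (ha : 0 < a) (hb : 0 < b) (n : ℕ) :
    HasSum (fun pq ↦ (eisensteinPoint a b pq ^ (2 * n + 4))⁻¹)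
      ((coshSubCosMoment (2 * n + 3) a b + (-1) ^ n * coshSubCosMoment (2 * n + 3) b a : ℂ) /
        (2 * n + 3).factorial) := by
  have h := hasSum_int_prod_inv_odd_mul_add_odd_mul_pow n (α := (a + b * Complex.I) / 2)
    (β := (a - b * Complex.I) / 2) (by simpa) (by simpa) (by simpa) (by simpa [neg_div])
  rw [coshMoment_eq_coshSubCosMoment (a := a) (b := b) _ (by ring) (by ring),
    coshMoment_eq_coshSubCosMoment (a := b) (b := -a) _
      (by linear_combination -b * Complex.I_sq) (by push_cast; ring),
    coshSubCosMoment_neg_right] at h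
  simpa only [Function.comp_def, ← eisensteinPoint_eq_oddCoordinates] using
    oddCoordinates.hasSum_iff.mpr h

lemma integral_pow_div_comp_sqrt (m : ℕ) (g : ℝ → ℝ) :
    ∫ x in Set.Ioi (0 : ℝ), x ^ m / g (√x) =
      2 * ∫ t in Set.Ioi (0 : ℝ), t ^ (2 * m + 1) / g t := by
  rw [← integral_comp_rpow_Ioi_of_pos (p := 2) two_pos, ← integral_const_mul]
  refine setIntegral_congr_fun measurableSet_Ioi fun t (ht : 0 < t) ↦ ?_
  norm_num [sqrt_sq ht.le]
  ring

/-- Kuznetsov's integral `I_n^−` with arbitrary real numbers `a` and `b` in place of `K` and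
`K'`. -/
noncomputable def kuznetsovMoment (a b : ℝ) (n : ℕ) : ℝ :=
  (∫ x in Set.Ioi (0 : ℝ), x ^ (n + 1) / (cos (a * √x) - cosh (b * √x))) +
    (-1) ^ (n + 1) * ∫ x in Set.Ioi (0 : ℝ), x ^ (n + 1) / (cosh (a * √x) - cos (b * √x))

lemma kuznetsovMoment_eq_coshSubCosMoment (a b : ℝ) (n : ℕ) :
    kuznetsovMoment a b n = 2 * ((-1) ^ (n + 1) * coshSubCosMoment (2 * n + 3) a b -
      coshSubCosMoment (2 * n + 3) b a) := by
  have hcosh (a b : ℝ) : ∫ x in Set.Ioi (0 : ℝ), x ^ (n + 1) / (cosh (a * √x) - cos (b * √x)) =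
      2 * coshSubCosMoment (2 * n + 3) a b :=
    integral_pow_div_comp_sqrt (n + 1) fun t ↦ cosh (a * t) - cos (b * t)
  have hcos : ∫ x in Set.Ioi (0 : ℝ), x ^ (n + 1) / (cos (a * √x) - cosh (b * √x)) =
      -(2 * coshSubCosMoment (2 * n + 3) b a) := by
    rw [← hcosh, ← integral_neg]
    congr 1 with x
    rw [← div_neg, neg_sub]
  rw [kuznetsovMoment, hcos, hcosh]
  ring

end Moments

theorem Iminus_eisenstein_series_general {a b : ℝ} (ha : 0 < a) (hb : 0 < b) (n : ℕ) :
    (∀ pq, eisensteinPoint a b pq ≠ 0) ∧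
    Summable (fun pq ↦ ‖(eisensteinPoint a b pq ^ (2 * n + 4))⁻¹‖) ∧
    (kuznetsovMoment a b n : ℂ) = (-1) ^ (n + 1) * 2 * (2 * n + 3).factorial *
      ∑' pq, (eisensteinPoint a b pq ^ (2 * n + 4))⁻¹ := by
  have hsum := hasSum_inv_eisensteinPoint_pow ha hb n
  refine ⟨eisensteinPoint_ne_zero ha.ne' hb.ne', hsum.summable.norm, ?_⟩
  have hsign : (-1 : ℂ) ^ (n + 1) * (-1) ^ n = -1 := by
    rw [← pow_add]
    exact Odd.neg_one_pow ⟨n, by ring⟩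
  rw [hsum.tsum_eq, kuznetsovMoment_eq_coshSubCosMoment,
    mul_assoc, mul_div_cancel₀ _ (Nat.cast_ne_zero.mpr (2 * n + 3).factorial_ne_zero)]
  push_cast
  linear_combination -2 * (coshSubCosMoment (2 * n + 3) b a : ℂ) * hsign

theorem Iminus_eisenstein_series (k : ℝ) (hk : k ∈ Set.Ioo (0 : ℝ) 1) (n : ℕ) :
    (∀ pq : ℤ × ℤ,
      ((2 * pq.2 + pq.1 - 1 : ℤ) : ℂ) * (ellipticK k : ℂ) +
        Complex.I * (pq.1 : ℂ) * (ellipticK (Real.sqrt (1 - k ^ 2)) : ℂ) ≠ 0) ∧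
    Summable (fun pq : ℤ × ℤ =>
      ‖((((2 * pq.2 + pq.1 - 1 : ℤ) : ℂ) * (ellipticK k : ℂ) +
          Complex.I * (pq.1 : ℂ) * (ellipticK (Real.sqrt (1 - k ^ 2)) : ℂ)) ^ (2 * n + 4))⁻¹‖) ∧
    (Iminus k n : ℂ) =
      (-1 : ℂ) ^ (n + 1) * 2 * (Nat.factorial (2 * n + 3) : ℂ) *
        ∑' pq : ℤ × ℤ,
          ((((2 * pq.2 + pq.1 - 1 : ℤ) : ℂ) * (ellipticK k : ℂ) +
            Complex.I * (pq.1 : ℂ) * (ellipticK (Real.sqrt (1 - k ^ 2)) : ℂ)) ^ (2 * n + 4))⁻¹ := by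
  obtain ⟨hk0, hk1⟩ := hk
  have hK' : √(1 - k ^ 2) ^ 2 < 1 := by rw [sq_sqrt (by nlinarith)]; nlinarith
  exact Iminus_eisenstein_series_general (ellipticK_pos (by nlinarith)) (ellipticK_pos hK') n
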